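/- A finite simple graph is word-representable if and only if it admits a semi-transitive orientation. -/

import Mathlib

/-- Two distinct letters `x` and `y` alternate in the word `w` if the subsequence of `w`
formed by all occurrences of `x` and `y` has no two equal consecutive letters. -/
def Alternates {V : Type*} [DecidableEq V] (w : List V) (x y : V) : Prop :=
  (w.filter (fun z => decide (z = x ∨ z = y))).Chain' (· ≠ ·)

/-- A graph `G` is word-representable if there is a word over its vertex set, in which
every vertex occurs, such that two distinct vertices alternate in the word iff
they are adjacent in `G`. -/
def WordRepresentable {V : Type*} [DecidableEq V] (G : SimpleGraph V) : Prop :=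
  ∃ w : List V, (∀ v : V, v ∈ w) ∧
    ∀ x y : V, x ≠ y → (Alternates w x y ↔ G.Adj x y)

/-- `D` is an orientation of `G`: every directed edge lies on an edge of `G`, and every
edge of `G` receives exactly one direction. -/
def IsOrientation {V : Type*} (G : SimpleGraph V) (D : V → V → Prop) : Prop :=
  (∀ x y, D x y → G.Adj x y) ∧
  (∀ x y, G.Adj x y → (D x y ∨ D y x)) ∧
  (∀ x y, ¬ (D x y ∧ D y x))

/-- `D` is a semi-transitive orientation of `G`: it is an acyclic orientation and, for
every directed path `p 0 → p 1 → ⋯ → p k` with `k ≥ 2`, either `p 0` and `p k` are not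
adjacent in `G`, or `D (p i) (p j)` holds for all `i < j ≤ k`. -/
def IsSemiTransitiveOrientation {V : Type*} (G : SimpleGraph V) (D : V → V → Prop) : Prop :=
  IsOrientation G D ∧
  (∀ v, ¬ Relation.TransGen D v v) ∧
  (∀ (k : ℕ) (p : ℕ → V), 2 ≤ k → (∀ i < k, D (p i) (p (i + 1))) →
    ¬ G.Adj (p 0) (p k) ∨ ∀ i j, i < j → j ≤ k → D (p i) (p j))

/-!
Let `c x n` be the number of occurrences of `x` among the first `n` letters of `w`. Two letters
alternate with `x` first iff `c y ≤ c x ≤ c y + 1`, so orienting the edges of a represented graph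
by first occurrence makes `c` strictly decreasing along directed paths. If moreover the endpoints
of a path are adjacent, then `c` drops by at most one along the whole path, hence between any two
of its vertices, which are therefore adjacent.

Conversely, let `D` be a semi-transitive orientation. Words in which every edge `x → y` spells
`xyxy⋯xy` are closed under concatenation, so it suffices to find, for each pair of nonadjacent
vertices, one such word in which they do not alternate. Such words are glued from pieces of a
topological sort of `D`: an incomparable pair is separated by two sorts that order it differently,
and if `y` is reachable from `x`, they spell `xxyy`. The only obstruction to the latter would be an
edge from a vertex below `x` to a vertex above `y`, and semi-transitivity would then make `x` and
`y` adjacent.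
-/

open List Relation

section PrefixCount

variable {V : Type*} [DecidableEq V] {w : List V} {x y z : V}

/-- The number of occurrences of the letter `x` among the first `n` letters of `w`, as a function
of `n`; the pointwise order on these functions compares the letters of `w`. -/
def prefixCount (w : List V) (x : V) : ℕ → ℕ := fun n => (w.take n).count x

lemma prefixCount_cons_succ (n : ℕ) :
    prefixCount (z :: w) x (n + 1) = prefixCount w x n + if z = x then 1 else 0 := by
  simp [prefixCount, count_cons]

lemma prefixCount_injOn (w : List V) : Set.InjOn (prefixCount w) {x | x ∈ w} := by
  intro x hx y _ h
  obtain ⟨s, t, rfl⟩ := append_of_mem hx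
  by_contra hne
  have before : s.count x = s.count y := by
    simpa [prefixCount] using congrFun h s.length
  have after : s.count x + 1 = s.count y := by
    simpa [prefixCount, take_append, take_of_length_le, hne] using congrFun h (s.length + 1)
  omega

/-- The letters `x` and `y` alternate in `w`, and `x` comes first (if either letter occurs). -/
def Leads (w : List V) (x y : V) : Prop :=
  prefixCount w y ≤ prefixCount w x ∧ prefixCount w x ≤ prefixCount w y + 1

lemma leads_iff_forall : Leads w x y ↔
    ∀ n, prefixCount w y n ≤ prefixCount w x n ∧ prefixCount w x n ≤ prefixCount w y n + 1 :=
  forall_and.symm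

lemma leads_cons_iff_forall : Leads (z :: w) x y ↔
    ∀ n, prefixCount w y n + (if z = y then 1 else 0) ≤ prefixCount w x n +
        (if z = x then 1 else 0) ∧
      prefixCount w x n + (if z = x then 1 else 0) ≤ prefixCount w y n +
        (if z = y then 1 else 0) + 1 := by
  rw [leads_iff_forall, ← Nat.and_forall_add_one]
  simp only [prefixCount_cons_succ]
  simp [prefixCount]

lemma leads_cons_self (h : x ≠ y) : Leads (x :: w) x y ↔ Leads w y x := by
  rw [leads_cons_iff_forall, leads_iff_forall]
  simp only [h, if_true, if_false]
  exact forall_congr' fun n => by omega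

lemma not_leads_cons (h : x ≠ y) : ¬ Leads (y :: w) x y := by
  intro H
  simpa [prefixCount, h.symm] using leads_cons_iff_forall.1 H 0

lemma leads_cons_of_ne (hx : z ≠ x) (hy : z ≠ y) : Leads (z :: w) x y ↔ Leads w x y := by
  rw [leads_cons_iff_forall, leads_iff_forall]
  simp [hx, hy]

end PrefixCount

section PairSubword

variable {V : Type*} [DecidableEq V] {w : List V} {x y : V}

/-- The subword of `w` formed by all occurrences of `x` and `y`. -/
def pairSubword (w : List V) (x y : V) : List V := w.filter fun z => decide (z = x ∨ z = y)

lemma pairSubword_comm (w : List V) (x y : V) : pairSubword w x y = pairSubword w y x := by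
  simp only [pairSubword, or_comm]

lemma alternates_iff_isChain : Alternates w x y ↔ (pairSubword w x y).IsChain (· ≠ ·) := Iff.rfl

lemma alternates_comm : Alternates w x y ↔ Alternates w y x := by
  rw [alternates_iff_isChain, alternates_iff_isChain, pairSubword_comm]

lemma pairSubword_append (u v : List V) (x y : V) :
    pairSubword (u ++ v) x y = pairSubword u x y ++ pairSubword v x y :=
  filter_append ..

lemma Alternates.left_of_append {u v : List V} (h : Alternates (u ++ v) x y) :
    Alternates u x y := by
  rw [alternates_iff_isChain, pairSubword_append] at h
  exact IsChain.left_of_append h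

lemma Alternates.right_of_append {u v : List V} (h : Alternates (u ++ v) x y) :
    Alternates v x y := by
  rw [alternates_iff_isChain, pairSubword_append] at h
  exact IsChain.right_of_append h

lemma leads_iff_isChain_head? (h : x ≠ y) : Leads w x y ↔
    (pairSubword w x y).IsChain (· ≠ ·) ∧ (pairSubword w x y).head? ≠ some y := by
  induction w generalizing x y with
  | nil => simp [leads_iff_forall, prefixCount, pairSubword]
  | cons z w ih =>
    rcases eq_or_ne z x with rfl | hx
    · have cons_eq : pairSubword (z :: w) z y = z :: pairSubword w z y := by simp [pairSubword]
      rw [leads_cons_self h, ih h.symm, pairSubword_comm w y z, cons_eq, isChain_cons]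
      cases (pairSubword w z y).head? <;> simp [h, and_comm, eq_comm]
    rcases eq_or_ne z y with rfl | hy
    · have cons_eq : pairSubword (z :: w) x z = z :: pairSubword w x z := by simp [pairSubword]
      simp [cons_eq, not_leads_cons h]
    · have cons_eq : pairSubword (z :: w) x y = pairSubword w x y := by simp [pairSubword, hx, hy]
      rw [cons_eq, leads_cons_of_ne hx hy, ih h]

lemma alternates_iff_leads_or_leads (h : x ≠ y) :
    Alternates w x y ↔ Leads w x y ∨ Leads w y x := by
  rw [leads_iff_isChain_head? h, leads_iff_isChain_head? h.symm, pairSubword_comm w y x,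
    ← and_or_left, alternates_iff_isChain, iff_self_and]
  rintro -
  by_contra! heads
  exact h (Option.some_injective _ (heads.2.symm.trans heads.1))

end PairSubword

section WordOrientation

variable {V : Type*} [DecidableEq V] {G : SimpleGraph V} {w : List V} {x y : V}

/-- The orientation of the graph represented by `w` in which every edge points away from the
endpoint that occurs first in `w`. -/
def wordOrientation (w : List V) (x y : V) : Prop := x ≠ y ∧ Leads w x y

lemma wordOrientation_iff_lt (hw : ∀ v, v ∈ w) : wordOrientation w x y ↔
    prefixCount w y < prefixCount w x ∧ prefixCount w x ≤ prefixCount w y + 1 := by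
  have inj : prefixCount w y = prefixCount w x ↔ y = x := (prefixCount_injOn w).eq_iff (hw y) (hw x)
  rw [wordOrientation, Leads, lt_iff_le_and_ne, Ne, Ne, inj, eq_comm (a := y)]
  tauto

lemma isOrientation_wordOrientation (hw : ∀ v, v ∈ w)
    (hG : ∀ x y, x ≠ y → (Alternates w x y ↔ G.Adj x y)) :
    IsOrientation G (wordOrientation w) := by
  refine ⟨fun x y ⟨hne, h⟩ => ?_, fun x y hxy => ?_, fun x y ⟨hxy, hyx⟩ => ?_⟩
  · exact (hG x y hne).1 ((alternates_iff_leads_or_leads hne).2 (Or.inl h))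
  · exact ((alternates_iff_leads_or_leads hxy.ne).1 ((hG x y hxy.ne).2 hxy)).imp
      (⟨hxy.ne, ·⟩) (⟨hxy.ne', ·⟩)
  · exact lt_asymm ((wordOrientation_iff_lt hw).1 hxy).1 ((wordOrientation_iff_lt hw).1 hyx).1

lemma not_transGen_wordOrientation_self (hw : ∀ v, v ∈ w) (v : V) :
    ¬ TransGen (wordOrientation w) v v := by
  intro h
  have lifted : TransGen (· < ·) (prefixCount w v) (prefixCount w v) :=
    h.swap.lift (prefixCount w) fun _ _ hab => ((wordOrientation_iff_lt hw).1 hab).1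
  rw [transGen_eq_self] at lifted
  exact lt_irrefl _ lifted

lemma strictAntiOn_prefixCount {k : ℕ} {p : ℕ → V} (hw : ∀ v, v ∈ w)
    (hp : ∀ i < k, wordOrientation w (p i) (p (i + 1))) :
    StrictAntiOn (prefixCount w ∘ p) (Set.Iic k) :=
  strictAntiOn_of_add_one_lt Set.ordConnected_Iic fun i _ _ hi =>
    ((wordOrientation_iff_lt hw).1 (hp i hi)).1

lemma isSemiTransitiveOrientation_wordOrientation (hw : ∀ v, v ∈ w)
    (hG : ∀ x y, x ≠ y → (Alternates w x y ↔ G.Adj x y)) :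
    IsSemiTransitiveOrientation G (wordOrientation w) := by
  have orient := isOrientation_wordOrientation hw hG
  refine ⟨orient, not_transGen_wordOrientation_self hw, fun k p hk hp => ?_⟩
  rw [or_iff_not_imp_left, not_not]
  intro hadj i j hij hjk
  have anti := strictAntiOn_prefixCount hw hp
  have last_lt_first : prefixCount w (p k) < prefixCount w (p 0) :=
    anti (by simp) (by simp) (by omega)
  have first_le : prefixCount w (p 0) ≤ prefixCount w (p k) + 1 := by
    rcases orient.2.1 _ _ hadj with h | h
    · exact h.2.2
    · exact absurd ((wordOrientation_iff_lt hw).1 h).1 last_lt_first.asymm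
  refine (wordOrientation_iff_lt hw).2 ⟨anti (hij.le.trans hjk) hjk hij, ?_⟩
  calc prefixCount w (p i)
      ≤ prefixCount w (p 0) := anti.antitoneOn (by simp) (hij.le.trans hjk) (Nat.zero_le i)
    _ ≤ prefixCount w (p k) + 1 := first_le
    _ ≤ prefixCount w (p j) + 1 := by gcongr; exact anti.antitoneOn hjk (by simp) hjk

end WordOrientation

section Shortcut

variable {V : Type*} {G : SimpleGraph V} {D : V → V → Prop}

lemma IsSemiTransitiveOrientation.pairwise_of_isChain (hD : IsSemiTransitiveOrientation G D)
    {a : V} {l : List V} (hl : (a :: l).IsChain D)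
    (hlast : D a ((a :: l).getLast (cons_ne_nil a l))) : (a :: l).Pairwise D := by
  match l with
  | [] => exact pairwise_singleton D a
  | [b] => exact pairwise_pair.2 hlast
  | b :: c :: l =>
    set L := a :: b :: c :: l with hL
    have hlen : L.length = l.length + 3 := by simp [hL]
    have hget : ∀ i (hi : i < L.length), L.getD i a = L[i] := fun i hi => getD_eq_getElem L a hi
    rcases hD.2.2 (l.length + 2) (L.getD · a) (by omega) fun i hi => by
      rw [hget i (by omega), hget (i + 1) (by omega)]
      exact hl.getElem i (by omega) with h | h
    · rw [hget _ (by omega), hget _ (by omega)] at h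
      refine absurd (hD.1.1 _ _ hlast) ?_
      rwa [getLast_eq_getElem]
    · refine pairwise_iff_getElem.2 fun i j hi hj hij => ?_
      simpa only [hget i hi, hget j hj] using h i j hij (by omega)

lemma isChain_cons_append_and_getLast {r : V → V → Prop} {a x : V} {l₁ l₂ : List V}
    (h₁ : (a :: l₁).IsChain r) (hx : (a :: l₁).getLast (cons_ne_nil a l₁) = x)
    (h₂ : (x :: l₂).IsChain r) : (a :: (l₁ ++ l₂)).IsChain r ∧
      (a :: (l₁ ++ l₂)).getLast (cons_ne_nil _ _) = (x :: l₂).getLast (cons_ne_nil _ _) := by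
  induction l₁ generalizing a with
  | nil =>
    subst hx
    exact ⟨h₂, rfl⟩
  | cons b l₁ ih =>
    obtain ⟨chain, last⟩ := ih h₁.tail hx
    exact ⟨isChain_cons_cons.2 ⟨h₁.rel, chain⟩, last⟩

lemma IsSemiTransitiveOrientation.rel_of_reflTransGen (hD : IsSemiTransitiveOrientation G D)
    {a x y b : V} (hax : ReflTransGen D a x) (hxy : ReflTransGen D x y) (hyb : ReflTransGen D y b)
    (hne : x ≠ y) (hab : D a b) : D x y := by
  obtain ⟨l₁, chain₁, last₁⟩ := exists_isChain_cons_of_relationReflTransGen hax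
  obtain ⟨l₂, chain₂, last₂⟩ := exists_isChain_cons_of_relationReflTransGen hxy
  obtain ⟨l₃, chain₃, last₃⟩ := exists_isChain_cons_of_relationReflTransGen hyb
  obtain ⟨chain₂₃, last₂₃⟩ := isChain_cons_append_and_getLast chain₂ last₂ chain₃
  obtain ⟨chain, last⟩ := isChain_cons_append_and_getLast chain₁ last₁ chain₂₃
  have transitive : ((a :: l₁) ++ (l₂ ++ l₃)).Pairwise D :=
    hD.pairwise_of_isChain chain (by rwa [← last₃, ← last₂₃, ← last] at hab)
  have l₂_ne : l₂ ≠ [] := by rintro rfl; exact hne last₂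
  have x_mem : x ∈ a :: l₁ := last₁ ▸ getLast_mem _
  have y_mem : y ∈ l₂ := by rw [← last₂, getLast_cons l₂_ne]; exact getLast_mem l₂_ne
  exact (pairwise_append.1 transitive).2.2 x x_mem y (mem_append_left l₃ y_mem)

end Shortcut

section TopologicalSort

variable {V : Type*} {D : V → V → Prop}

/-- `L` is a topological sort of the digraph `D`: it lists every vertex once, the tail of every
edge before its head. -/
structure IsTopologicalSort (D : V → V → Prop) (L : List V) : Prop where
  nodup : L.Nodup
  mem : ∀ v, v ∈ L
  pair_sublist : ∀ x y, D x y → [x, y] <+ L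

lemma pair_sublist_or_pair_sublist {L : List V} {x y : V} (hx : x ∈ L) (hy : y ∈ L) (hne : x ≠ y) :
    [x, y] <+ L ∨ [y, x] <+ L := by
  obtain ⟨s, t, rfl⟩ := append_of_mem hx
  rcases mem_append.1 hy with hs | ht
  · exact Or.inr ((singleton_sublist.2 hs).append (singleton_sublist.2 mem_cons_self))
  · have y_mem : y ∈ t := (mem_cons.1 ht).resolve_left hne.symm
    exact Or.inl (((singleton_sublist.2 y_mem).cons_cons x).trans (sublist_append_right s _))

lemma isPartialOrder_reflTransGen (hD : ∀ v, ¬ TransGen D v v) :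
    IsPartialOrder V (ReflTransGen D) where
  refl _ := .refl
  trans _ _ _ := .trans
  antisymm a b hab hba := by
    rcases reflTransGen_iff_eq_or_transGen.1 hab with h | h
    · exact h.symm
    · exact absurd (h.trans_left hba) (hD a)

lemma exists_isTopologicalSort [Finite V] (hD : ∀ v, ¬ TransGen D v v) :
    ∃ L, IsTopologicalSort D L := by
  classical
  have := Fintype.ofFinite V
  have := isPartialOrder_reflTransGen hD
  obtain ⟨s, _, le_s⟩ := extend_partialOrder (ReflTransGen D)
  have mem (v : V) : v ∈ Finset.univ.sort s := (Finset.mem_sort s).2 (Finset.mem_univ v)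
  refine ⟨Finset.univ.sort s, Finset.sort_nodup _ _, mem, fun x y hxy => ?_⟩
  have hne : x ≠ y := by rintro rfl; exact hD x (.single hxy)
  refine (pair_sublist_or_pair_sublist (mem x) (mem y) hne).resolve_right fun h => hne ?_
  have s_yx : s y x := pairwise_iff_forall_sublist.1 (Finset.pairwise_sort Finset.univ s) h
  exact antisymm_of s (le_s x y (.single hxy)) s_yx

variable [DecidableEq V] {L : List V} {x y : V}

lemma pairSubword_eq_of_pair_sublist (hL : L.Nodup) (h : [x, y] <+ L) :
    pairSubword L x y = [x, y] := by
  have perm : [x, y] ~ pairSubword L x y :=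
    (perm_ext_iff_of_nodup (hL.sublist h) (hL.filter _)).2 fun z => by
      simp only [mem_filter, mem_cons, not_mem_nil, or_false, decide_eq_true_eq,
        iff_and_self]
      rintro (rfl | rfl) <;> exact h.subset (by simp)
  have sublist : [x, y] <+ pairSubword L x y := by
    simpa [pairSubword] using h.filter fun z => decide (z = x ∨ z = y)
  exact (sublist.eq_of_length perm.length_eq).symm

lemma IsTopologicalSort.pairSubword_eq (hL : IsTopologicalSort D L) (hxy : D x y) :
    pairSubword L x y = [x, y] :=
  pairSubword_eq_of_pair_sublist hL.nodup (hL.pair_sublist x y hxy)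

lemma IsTopologicalSort.pairSubword_eq_or (hL : IsTopologicalSort D L) (hne : x ≠ y) :
    pairSubword L x y = [x, y] ∨ pairSubword L x y = [y, x] := by
  refine (pair_sublist_or_pair_sublist (hL.mem x) (hL.mem y) hne).imp
    (pairSubword_eq_of_pair_sublist hL.nodup) fun h => ?_
  rw [pairSubword_comm, pairSubword_eq_of_pair_sublist hL.nodup h]

end TopologicalSort

section Realizes

variable {V : Type*} [DecidableEq V] {D : V → V → Prop} {w : List V} {x y : V}

/-- The word `w` realizes the digraph `D`: every edge `x → y` of `D` spells `xyxy⋯xy` in `w`. -/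
def Realizes (D : V → V → Prop) (w : List V) : Prop :=
  ∀ x y, D x y → ∃ k, pairSubword w x y = (replicate k [x, y]).flatten

lemma realizes_nil : Realizes D [] := fun _ _ _ => ⟨0, rfl⟩

lemma Realizes.append {u v : List V} (hu : Realizes D u) (hv : Realizes D v) :
    Realizes D (u ++ v) := by
  intro x y hxy
  obtain ⟨j, hj⟩ := hu x y hxy
  obtain ⟨k, hk⟩ := hv x y hxy
  exact ⟨j + k, by rw [pairSubword_append, hj, hk, ← flatten_append, replicate_append_replicate]⟩

lemma Realizes.alternates (hw : Realizes D w) (hxy : D x y) (hne : x ≠ y) : Alternates w x y := by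
  obtain ⟨k, hk⟩ := hw x y hxy
  rw [alternates_iff_isChain, hk, isChain_flatten (by simp)]
  refine ⟨fun l hl => ?_, isChain_replicate_of_rel k (by simpa using hne.symm)⟩
  simpa [eq_of_mem_replicate hl] using hne

lemma IsTopologicalSort.realizes {L : List V} (hL : IsTopologicalSort D L) : Realizes D L :=
  fun x y hxy => ⟨1, by simpa using hL.pairSubword_eq hxy⟩

lemma exists_realizes_forall_not_alternates (s : Finset (V × V))
    (hs : ∀ e ∈ s, ∃ w, Realizes D w ∧ ¬ Alternates w e.1 e.2) :
    ∃ w, Realizes D w ∧ ∀ e ∈ s, ¬ Alternates w e.1 e.2 := by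
  induction s using Finset.induction with
  | empty => exact ⟨[], realizes_nil, by simp⟩
  | insert e s _ ih =>
    rw [Finset.forall_mem_insert] at hs
    obtain ⟨u, hu, not_alt_e⟩ := hs.1
    obtain ⟨v, hv, not_alt_s⟩ := ih hs.2
    exact ⟨u ++ v, hu.append hv, (Finset.forall_mem_insert _ _ _).2
      ⟨fun h => not_alt_e h.left_of_append, fun f hf h => not_alt_s f hf h.right_of_append⟩⟩

end Realizes

section BlockWord

variable {V : Type*} {D : V → V → Prop} {L : List V}

open Classical in
/-- The word obtained by listing, for each set in `𝓢` in turn, its vertices in the order of `L`. -/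
noncomputable def blockWord (L : List V) (𝓢 : List (Set V)) : List V :=
  𝓢.flatMap fun S => L.filter (· ∈ S)

variable [DecidableEq V] {P Q N : Set V} {x y : V}

lemma pairSubword_blockWord (L : List V) (𝓢 : List (Set V)) (x y : V) :
    pairSubword (blockWord L 𝓢) x y = blockWord (pairSubword L x y) 𝓢 := by
  simp only [pairSubword, blockWord, filter_flatMap, filter_comm]

lemma realizes_blockWord_compl (hL : IsTopologicalSort D L)
    (hP : ∀ a b, D a b → b ∈ P → a ∈ P) : Realizes D (blockWord L [P, Pᶜ]) := by
  intro a b hab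
  refine ⟨1, ?_⟩
  rw [pairSubword_blockWord, hL.pairSubword_eq hab]
  have := hP a b hab
  by_cases a ∈ P <;> by_cases b ∈ P <;> simp_all [blockWord]

lemma pairSubword_blockWord_compl (hL : IsTopologicalSort D L) (hx : x ∈ P) (hy : y ∉ P) :
    pairSubword (blockWord L [P, Pᶜ]) x y = [x, y] := by
  rw [pairSubword_blockWord]
  rcases hL.pairSubword_eq_or (ne_of_mem_of_not_mem hx hy) with h | h <;>
    simp [h, blockWord, hx, hy]

lemma realizes_blockWord_of_subset (hL : IsTopologicalSort D L) (hPN : P ⊆ N)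
    (hP : ∀ a b, D a b → b ∈ P → a ∈ P) (hN : ∀ a b, D a b → b ∈ N → a ∈ N)
    (hout : ∀ a b, D a b → a ∈ P → b ∈ N) : Realizes D (blockWord L [N, P, Nᶜ, Pᶜ]) := by
  intro a b hab
  refine ⟨2, ?_⟩
  rw [pairSubword_blockWord, hL.pairSubword_eq hab]
  have haP := hP a b hab
  have haN := hN a b hab
  have hbN := hout a b hab
  have haPN := @hPN a
  by_cases a ∈ P <;> by_cases b ∈ P <;> by_cases a ∈ N <;> by_cases b ∈ N <;>
    simp_all [blockWord, replicate_succ]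

lemma not_alternates_blockWord_of_subset (hL : IsTopologicalSort D L) (hPN : P ⊆ N)
    (hx : x ∈ P) (hy : y ∉ N) : ¬ Alternates (blockWord L [N, P, Nᶜ, Pᶜ]) x y := by
  have hxN : x ∈ N := hPN hx
  have hyP : y ∉ P := fun h => hy (hPN h)
  rw [alternates_iff_isChain, pairSubword_blockWord]
  rcases hL.pairSubword_eq_or (ne_of_mem_of_not_mem hx hyP) with h | h <;>
    simp [h, blockWord, hx, hy, hxN, hyP]

end BlockWord

section Separation

variable {V : Type*} [Finite V] [DecidableEq V] {G : SimpleGraph V} {D : V → V → Prop} {x y : V}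

lemma exists_realizes_not_alternates_of_incomparable (hD : ∀ v, ¬ TransGen D v v)
    (hxy : ¬ ReflTransGen D x y) (hyx : ¬ ReflTransGen D y x) :
    ∃ w, Realizes D w ∧ ¬ Alternates w x y := by
  obtain ⟨L, hL⟩ := exists_isTopologicalSort hD
  let P : Set V := {a | ReflTransGen D a x}
  let Q : Set V := {a | ReflTransGen D a y}
  refine ⟨blockWord L [P, Pᶜ] ++ blockWord L [Q, Qᶜ], .append ?_ ?_, ?_⟩
  · exact realizes_blockWord_compl hL fun a b hab hb => .head hab hb
  · exact realizes_blockWord_compl hL fun a b hab hb => .head hab hb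
  · rw [alternates_iff_isChain, pairSubword_append, pairSubword_comm (blockWord L [Q, Qᶜ]),
      pairSubword_blockWord_compl hL (P := P) .refl hyx,
      pairSubword_blockWord_compl hL (P := Q) .refl hxy]
    simp

lemma exists_realizes_not_alternates_of_reflTransGen (hD : IsSemiTransitiveOrientation G D)
    (hne : x ≠ y) (hadj : ¬ G.Adj x y) (hxy : ReflTransGen D x y) :
    ∃ w, Realizes D w ∧ ¬ Alternates w x y := by
  obtain ⟨L, hL⟩ := exists_isTopologicalSort hD.2.1
  let P : Set V := {a | ReflTransGen D a x}
  -- The smallest admissible choice: everything below `P` or below an out-neighbour of `P`.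
  let N : Set V := {a | ∃ d e, ReflTransGen D d x ∧ ReflGen D d e ∧ ReflTransGen D a e}
  have hPN : P ⊆ N := fun a ha => ⟨x, x, .refl, .refl, ha⟩
  have hy : y ∉ N := by
    rintro ⟨d, e, hdx, hde, hye⟩
    rcases hde with _ | hde
    · exact hne ((isPartialOrder_reflTransGen hD.2.1).antisymm x y hxy (hye.trans hdx))
    · exact hadj (hD.1.1 x y (hD.rel_of_reflTransGen hdx hxy hye hne hde))
  refine ⟨blockWord L [N, P, Nᶜ, Pᶜ], realizes_blockWord_of_subset hL hPN ?_ ?_ ?_,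
    not_alternates_blockWord_of_subset hL hPN .refl hy⟩
  · exact fun a b hab hb => .head hab hb
  · exact fun a b hab ⟨d, e, hdx, hde, hbe⟩ => ⟨d, e, hdx, hde, .head hab hbe⟩
  · exact fun a b hab ha => ⟨a, b, ha, .single hab, .refl⟩

lemma exists_realizes_not_alternates (hD : IsSemiTransitiveOrientation G D)
    (hne : x ≠ y) (hadj : ¬ G.Adj x y) : ∃ w, Realizes D w ∧ ¬ Alternates w x y := by
  by_cases hxy : ReflTransGen D x y
  · exact exists_realizes_not_alternates_of_reflTransGen hD hne hadj hxy
  by_cases hyx : ReflTransGen D y x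
  · simp only [alternates_comm (x := x)]
    exact exists_realizes_not_alternates_of_reflTransGen hD hne.symm (hadj ·.symm) hyx
  · exact exists_realizes_not_alternates_of_incomparable hD.2.1 hxy hyx

lemma IsSemiTransitiveOrientation.wordRepresentable (hD : IsSemiTransitiveOrientation G D) :
    WordRepresentable G := by
  obtain ⟨L, hL⟩ := exists_isTopologicalSort hD.2.1
  obtain ⟨w, hw, not_alt⟩ := exists_realizes_forall_not_alternates
    (Set.toFinite {e : V × V | e.1 ≠ e.2 ∧ ¬ G.Adj e.1 e.2}).toFinset fun e he =>
      have ⟨hne, hadj⟩ := (Set.Finite.mem_toFinset _).1 he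
      exists_realizes_not_alternates hD hne hadj
  have realizes : Realizes D (L ++ w) := hL.realizes.append hw
  refine ⟨L ++ w, fun v => mem_append_left w (hL.mem v), fun x y hne => ⟨fun alt => ?_, ?_⟩⟩
  · by_contra hadj
    exact not_alt (x, y) (by simp [hne, hadj]) alt.right_of_append
  · intro hadj
    rcases hD.1.2.1 x y hadj with h | h
    · exact realizes.alternates h hne
    · exact alternates_comm.1 (realizes.alternates h hne.symm)

end Separation

/-- A finite simple graph is word-representable if and only if it admits a
semi-transitive orientation. -/
theorem stmt0 {V : Type*} [Fintype V] [DecidableEq V] (G : SimpleGraph V) :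
    WordRepresentable G ↔ ∃ D : V → V → Prop, IsSemiTransitiveOrientation G D := by
  constructor
  · rintro ⟨w, hw, hG⟩
    exact ⟨wordOrientation w, isSemiTransitiveOrientation_wordOrientation hw hG⟩
  · rintro ⟨D, hD⟩
    exact hD.wordRepresentable
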